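/- If Γ = (V, T, s, r) is a network with |T| > 1 and there exist t, q ∈ T such that o(r(t)) = 0, r(t) ≠ r(q), and there does not exist A ∈ T⁰∖{{v} : v ∈ V} with r(t) ⊆ A, then S_Γ is not *-congruence-free as a unary semigroup, and R_Γ is not congruence-free. -/

import Mathlib

/-! The hypotheses force `r(t)` to be a single vertex `v` that is a sink: no relation has a source
meeting `v`, and no other element of `T⁰` meets `v` (`isSink_rng`). Hence a product `v x` in `Q_Γ`
is zero or of the form `v t₁⁻¹ ⋯ tₙ⁻¹`, and the two-sided ideal `Q_Γ v Q_Γ` is the set `K v` of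
zero and all `y v t₁⁻¹ ⋯ tₙ⁻¹` (`K_mul`, `mul_K`). The required congruence, on `S_Γ` as well as on
`R_Γ`, is the Rees congruence of the intersection with this ideal (`reesCon`).

It respects `*`: every `a ∈ S_Γ` in the ideal has a right identity `f ∈ S_Γ` in the ideal, namely
`ββ⁻¹` for `a = αβ⁻¹` and `0` for `a = 0` (`exists_right_id`). If `e` is `L*`-related to `a`, then `a f = a 1` gives
`e f = e`, so `e` is in the ideal too (`starOf_mem_K`).

It is neither the identity nor universal: `t t⁻¹` is a nonzero element of the ideal, and `q q⁻¹` is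
outside it. As `t⁻¹ (t t⁻¹) t = r(t)`, it suffices to see that `r(t) ≠ 0` and that `r(q)` is not in
the ideal. This is read off from a representation of `Q_Γ` by partial maps on finite sequences of
relations ending at a prescribed `E ∈ T⁰`, which factors through the graph inverse semigroup with
vertices `T⁰` and edges `T` (`rep`). For `E = r(q) ≠ v` no sequence has source `v`, so the ideal acts
as zero (`rep_K`) while `r(q)` does not.

That `S_Γ` and `R_Γ` are subsemigroups comes from right normal forms (`NF`): `S_Γ` is the left
ideal of `Q_Γ` generated by `T⁻¹` (`mem_Sset_iff`), and for `R_Γ` the normal forms with a linear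
positive part are multiplied one relation at a time (`mul_lin`, `mul_NF_lin`). -/

namespace NetworkSemigroup

/-- A network: vertices `V`, relations `T`, with source and range maps assigning to each
relation disjoint nonempty subsets of `V`. -/
structure Network (V T : Type) where
  s : T → Set V
  r : T → Set V
  s_nonempty : ∀ t, (s t).Nonempty
  r_nonempty : ∀ t, (r t).Nonempty
  disj : ∀ t, s t ∩ r t = ∅

variable {V T : Type}

/-- Membership in `T⁰`: sources and ranges of relations, together with singletons of vertices. -/
def Network.InT0 (N : Network V T) (A : Set V) : Prop :=
  (∃ t, A = N.s t) ∨ (∃ t, A = N.r t) ∨ (∃ v : V, A = {v})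

/-- The set `T⁰` as a type. -/
def Network.T0 (N : Network V T) : Type := { A : Set V // N.InT0 A }

/-- The generating set `X = T ∪ T⁰ ∪ T⁻¹ ∪ {0}` of the presentation of `Q_Γ`. -/
inductive Gen (N : Network V T) : Type
  | pos : T → Gen N
  | neg : T → Gen N
  | ver : N.T0 → Gen N
  | zero : Gen N

namespace Gen

variable {N : Network V T}

/-- The source (as a set of vertices) of a generator. -/
def srcSet : Gen N → Set V
  | .pos t => N.s t
  | .neg t => N.r t
  | .ver A => A.1
  | .zero => ∅

/-- The range (as a set of vertices) of a generator. -/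
def rngSet : Gen N → Set V
  | .pos t => N.r t
  | .neg t => N.s t
  | .ver A => A.1
  | .zero => ∅

/-- The source of a generator, as the corresponding element of `T⁰`. -/
def srcGen : Gen N → Gen N
  | .pos t => .ver ⟨N.s t, Or.inl ⟨t, rfl⟩⟩
  | .neg t => .ver ⟨N.r t, Or.inr (Or.inl ⟨t, rfl⟩)⟩
  | .ver A => .ver A
  | .zero => .zero

/-- The range of a generator, as the corresponding element of `T⁰`. -/
def rngGen : Gen N → Gen N
  | .pos t => .ver ⟨N.r t, Or.inr (Or.inl ⟨t, rfl⟩)⟩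
  | .neg t => .ver ⟨N.s t, Or.inl ⟨t, rfl⟩⟩
  | .ver A => .ver A
  | .zero => .zero

end Gen

open FreeSemigroup

/-- The defining relations (NR1)–(NR6) of the presentation of `Q_Γ`, as a binary relation on
the free semigroup over the generators. -/
inductive NRel (N : Network V T) : FreeSemigroup (Gen N) → FreeSemigroup (Gen N) → Prop
  | nr1l (g : Gen N) (hg : g ≠ .zero) : NRel N (of g.srcGen * of g) (of g)
  | nr1r (g : Gen N) (hg : g ≠ .zero) : NRel N (of g * of g.rngGen) (of g)
  | nr2 (g₁ g₂ : Gen N) (h₁ : g₁ ≠ .zero) (h₂ : g₂ ≠ .zero)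
      (h : g₁.rngSet ∩ g₂.srcSet = ∅) : NRel N (of g₁ * of g₂) (of .zero)
  | nr3 (t₁ t₂ : T) (h : t₁ ≠ t₂) :
      NRel N (of (.neg t₁) * of (.pos t₂)) (of .zero)
  | nr4 (t : T) :
      NRel N (of (.neg t) * of (.pos t)) (of (.ver ⟨N.r t, Or.inr (Or.inl ⟨t, rfl⟩)⟩))
  | nr5 (t : T) (A : N.T0) (h : A.1 ≠ N.s t) :
      NRel N (of (.neg t) * of (.ver A)) (of .zero)
  | nr6l (x : Gen N) : NRel N (of .zero * of x) (of .zero)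
  | nr6r (x : Gen N) : NRel N (of x * of .zero) (of .zero)

/-- The congruence on the free semigroup generated by the defining relations. -/
def QCon (N : Network V T) : Con (FreeSemigroup (Gen N)) := conGen (NRel N)

/-- The semigroup `Q_Γ` given by the presentation `⟨X : R⟩`. -/
abbrev QGamma (N : Network V T) : Type := (QCon N).Quotient

/-- The congruence class of a word. -/
def Qofw {N : Network V T} (w : FreeSemigroup (Gen N)) : QGamma N := (w : (QCon N).Quotient)

/-- The zero element `[0]` of `Q_Γ`. -/
def Qzero (N : Network V T) : QGamma N := Qofw (of .zero)

/-- Path symbols: elements of `T ∪ T⁰`. -/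
def PSym (N : Network V T) : Type := T ⊕ N.T0

namespace PSym

variable {N : Network V T}

/-- The source of a path symbol. -/
def src : PSym N → Set V
  | Sum.inl t => N.s t
  | Sum.inr A => A.1

/-- The range of a path symbol. -/
def rng : PSym N → Set V
  | Sum.inl t => N.r t
  | Sum.inr A => A.1

/-- The generator corresponding to a path symbol. -/
def toGen : PSym N → Gen N
  | Sum.inl t => Gen.pos t
  | Sum.inr A => Gen.ver A

/-- The generator corresponding to the inverse of a path symbol (`t ↦ t⁻¹`, `A ↦ A`). -/
def toInvGen : PSym N → Gen N
  | Sum.inl t => Gen.neg t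
  | Sum.inr A => Gen.ver A

/-- The path symbol is the element of `T⁰` given by the set `B`. -/
def IsVerOf : PSym N → Set V → Prop
  | Sum.inl _, _ => False
  | Sum.inr A, B => A.1 = B

end PSym

/-- `L` is a path: a nonempty sequence of elements of `T ∪ T⁰` in which the range of each
symbol meets the source of the next one. -/
def IsPath (N : Network V T) (L : List (PSym N)) : Prop :=
  L ≠ [] ∧ ∀ (i : ℕ) (a b : PSym N), L[i]? = some a → L[i + 1]? = some b →
    (a.rng ∩ b.src).Nonempty

/-- `L` is linear: the range of each symbol equals the source of the next one. -/
def IsLinear (N : Network V T) (L : List (PSym N)) : Prop :=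
  ∀ (i : ℕ) (a b : PSym N), L[i]? = some a → L[i + 1]? = some b → a.rng = b.src

/-- `L = t₁⋯tₙ` is reduced: `t_{n-1} ≠ s(tₙ)` and, for `1 < i < n`,
`t_{i-1} ≠ s(tᵢ)` and `t_{i+1} ≠ r(tᵢ)`. -/
def IsReducedPath (N : Network V T) (L : List (PSym N)) : Prop :=
  (∀ (i : ℕ) (a b : PSym N), L[i]? = some a → L[i + 1]? = some b →
      i + 2 = L.length → ¬ a.IsVerOf b.src) ∧
  (∀ (i : ℕ) (a b c : PSym N), L[i]? = some a → L[i + 1]? = some b → L[i + 2]? = some c →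
      ¬ a.IsVerOf b.src ∧ ¬ c.IsVerOf b.rng)

/-- `RP(Γ)`: reduced paths. -/
def RP (N : Network V T) : Set (List (PSym N)) :=
  { L | IsPath N L ∧ IsReducedPath N L }

/-- `RLP(Γ)`: reduced linear paths. -/
def RLP (N : Network V T) : Set (List (PSym N)) :=
  { L | IsPath N L ∧ IsLinear N L ∧ IsReducedPath N L }

/-- The source `s(α)` of a path. -/
def pathSrc (N : Network V T) (L : List (PSym N)) : Set V :=
  match L.head? with
  | some a => a.src
  | none => ∅

/-- The range `r(α)` of a path. -/
def pathRng (N : Network V T) (L : List (PSym N)) : Set V :=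
  match L.getLast? with
  | some a => a.rng
  | none => ∅

/-- The path is a single symbol from `T⁰` (an "empty path"). -/
def InT0Path (N : Network V T) (L : List (PSym N)) : Prop :=
  ∃ A : N.T0, L = [Sum.inr A]

/-- The word of the free semigroup determined by a nonempty list of generators
(by convention the empty list is sent to the word `0`). -/
def genWord {N : Network V T} : List (Gen N) → FreeSemigroup (Gen N)
  | [] => of .zero
  | a :: M => ⟨a, M⟩

/-- The word `α` of a path `α`. -/
def word {N : Network V T} (L : List (PSym N)) : FreeSemigroup (Gen N) :=
  genWord (L.map PSym.toGen)

/-- The word `α⁻¹ = tₙ⁻¹⋯t₁⁻¹` of a path `α = t₁⋯tₙ`. -/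
def invWord {N : Network V T} (L : List (PSym N)) : FreeSemigroup (Gen N) :=
  genWord (L.reverse.map PSym.toInvGen)

/-- `αβ⁻¹` is in right normal form: `α ∈ RP(Γ)`, `β ∈ RLP(Γ)` and `r(α) = r(β)`. -/
def IsRNF (N : Network V T) (α β : List (PSym N)) : Prop :=
  α ∈ RP N ∧ β ∈ RLP N ∧ pathRng N α = pathRng N β

/-- The element `[αβ⁻¹]` of `Q_Γ`. -/
def Qrnf (N : Network V T) (α β : List (PSym N)) : QGamma N :=
  Qofw (word α * invWord β)

/-- The relation `L*`: `a L* b` iff for all `x, y ∈ S¹`, `ax = ay ⇔ bx = by`. -/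
def LStar {S : Type*} [Semigroup S] (a b : S) : Prop :=
  ∀ x y : WithOne S,
    (a : WithOne S) * x = (a : WithOne S) * y ↔ (b : WithOne S) * x = (b : WithOne S) * y

/-- The relation `R*`: `a R* b` iff for all `x, y ∈ S¹`, `xa = ya ⇔ xb = yb`. -/
def RStar {S : Type*} [Semigroup S] (a b : S) : Prop :=
  ∀ x y : WithOne S,
    x * (a : WithOne S) = y * (a : WithOne S) ↔ x * (b : WithOne S) = y * (b : WithOne S)

/-- Green's relation `R`: `a R b` iff `aS¹ = bS¹`. -/
def GreenR {S : Type*} [Semigroup S] (a b : S) : Prop :=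
  (∃ x : WithOne S, (a : WithOne S) * x = b) ∧ ∃ y : WithOne S, (b : WithOne S) * y = a

/-- Green's relation `L`: `a L b` iff `S¹a = S¹b`. -/
def GreenL {S : Type*} [Semigroup S] (a b : S) : Prop :=
  (∃ x : WithOne S, x * (a : WithOne S) = b) ∧ ∃ y : WithOne S, y * (b : WithOne S) = a

/-- Green's relation `H = L ∩ R`. -/
def GreenH {S : Type*} [Semigroup S] (a b : S) : Prop :=
  GreenL a b ∧ GreenR a b


/-- The underlying set of the subsemigroup
`S_Γ = {[αβ⁻¹] : α ∈ RP(Γ), β ∈ RLP(Γ)∖T⁰, r(α) = r(β)} ∪ {[0]}` of `Q_Γ`. -/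
def Sset (N : Network V T) : Set (QGamma N) :=
  { q | ∃ α β : List (PSym N), α ∈ RP N ∧ β ∈ RLP N ∧ ¬ InT0Path N β ∧
      pathRng N α = pathRng N β ∧ q = Qrnf N α β } ∪ {Qzero N}

/-- The underlying set of `R_Γ = {[αβ⁻¹] : α, β ∈ RLP(Γ)∖T⁰, r(α) = r(β)} ∪ {[0]}`. -/
def Rset (N : Network V T) : Set (QGamma N) :=
  { q | ∃ α β : List (PSym N), α ∈ RLP N ∧ ¬ InT0Path N α ∧ β ∈ RLP N ∧ ¬ InT0Path N β ∧
      pathRng N α = pathRng N β ∧ q = Qrnf N α β } ∪ {Qzero N}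

open scoped Classical in
/-- In a right `*`-abundant semigroup, `a*` is the unique idempotent `L*`-related to `a`
(defined by choice; if no such idempotent exists we default to `a` itself). -/
noncomputable def starOf {S : Type*} [Semigroup S] (a : S) : S :=
  if h : ∃ e : S, IsIdempotentElem e ∧ LStar a e then h.choose else a

/-! ### Generators and the presentation -/

/-- The class in `Q_Γ` of a single generator. -/
def G {N : Network V T} (g : Gen N) : QGamma N := Qofw (of g)

/-- `s(t)` as an element of `T⁰`. -/
def srcT (N : Network V T) (t : T) : N.T0 := ⟨N.s t, Or.inl ⟨t, rfl⟩⟩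

/-- `r(t)` as an element of `T⁰`. -/
def rngT (N : Network V T) (t : T) : N.T0 := ⟨N.r t, Or.inr (Or.inl ⟨t, rfl⟩)⟩

section basic

variable {N : Network V T}

theorem T0_nonempty (A : N.T0) : A.1.Nonempty := by
  obtain ⟨A, ⟨t, rfl⟩ | ⟨t, rfl⟩ | ⟨v, rfl⟩⟩ := A
  · exact N.s_nonempty t
  · exact N.r_nonempty t
  · exact ⟨v, rfl⟩

theorem rel_eq {x y : FreeSemigroup (Gen N)} (h : NRel N x y) : Qofw x = Qofw y :=
  (QCon N).eq.2 (ConGen.Rel.of _ _ h)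

theorem G_zero : (G Gen.zero : QGamma N) = Qzero N := rfl

/-- Induction on elements of `Q_Γ` by right multiplication with generators. -/
theorem Q_induct_right {C : QGamma N → Prop} (h : ∀ x g, C x → C (x * G g)) (x : QGamma N)
    (hx : C x) (y : QGamma N) : C (x * y) := by
  induction y using Con.induction_on with
  | _ y =>
    induction y generalizing x with
    | ih1 g => exact h x g hx
    | ih2 g y _ ih =>
      have := ih (x * G g) (h x g hx)
      rw [mul_assoc] at this
      exact this

theorem Q_induct {C : QGamma N → Prop} (h0 : ∀ g, C (G g)) (h : ∀ x g, C x → C (x * G g))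
    (x : QGamma N) : C x := by
  induction x using Con.induction_on with
  | _ y =>
    induction y with
    | ih1 g => exact h0 g
    | ih2 g y _ _ => exact Q_induct_right h (G g) (h0 g) (y : (QCon N).Quotient)

theorem mul_Qzero (x : QGamma N) : x * Qzero N = Qzero N := by
  induction x using Con.induction_on with
  | _ y =>
    induction y with
    | ih1 g => exact rel_eq (NRel.nr6r g)
    | ih2 g y _ ih =>
      change G g * Qofw y * Qzero N = Qzero N
      rw [mul_assoc]
      refine (congrArg (G g * ·) ih).trans ?_
      exact rel_eq (NRel.nr6r g)

theorem Qzero_mul (x : QGamma N) : Qzero N * x = Qzero N := by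
  refine Q_induct_right (C := fun y => y = Qzero N) ?_ (Qzero N) rfl x
  rintro _ g rfl
  exact rel_eq (NRel.nr6l g)

theorem src_mul_pos (t : T) : (G (.ver (srcT N t)) : QGamma N) * G (.pos t) = G (.pos t) :=
  rel_eq (NRel.nr1l (.pos t) (by simp))

theorem pos_mul_rng (t : T) : (G (.pos t) : QGamma N) * G (.ver (rngT N t)) = G (.pos t) :=
  rel_eq (NRel.nr1r (.pos t) (by simp))

theorem rng_mul_neg (t : T) : (G (.ver (rngT N t)) : QGamma N) * G (.neg t) = G (.neg t) :=
  rel_eq (NRel.nr1l (.neg t) (by simp))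

theorem neg_mul_src (t : T) : (G (.neg t) : QGamma N) * G (.ver (srcT N t)) = G (.neg t) :=
  rel_eq (NRel.nr1r (.neg t) (by simp))

theorem ver_mul_self (A : N.T0) : (G (.ver A) : QGamma N) * G (.ver A) = G (.ver A) :=
  rel_eq (NRel.nr1r (.ver A) (by simp))

theorem neg_mul_pos (t : T) : (G (.neg t) : QGamma N) * G (.pos t) = G (.ver (rngT N t)) :=
  rel_eq (NRel.nr4 t)

theorem neg_mul_pos_ne {t u : T} (h : t ≠ u) :
    (G (.neg t) : QGamma N) * G (.pos u) = Qzero N :=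
  rel_eq (NRel.nr3 t u h)

theorem neg_mul_ver_ne {t : T} {A : N.T0} (h : A ≠ srcT N t) :
    (G (.neg t) : QGamma N) * G (.ver A) = Qzero N :=
  rel_eq (NRel.nr5 t A fun h' => h (Subtype.ext h'))

/-- The relation "the range of `a` meets the source of `b`" on path symbols. -/
def Meet (a b : PSym N) : Prop := (a.rng ∩ b.src).Nonempty

theorem toGen_mul_of_not_meet {a b : PSym N} (h : ¬ Meet a b) :
    G a.toGen * G b.toGen = Qzero N := by
  have h' : a.rng ∩ b.src = ∅ := Set.not_nonempty_iff_eq_empty.1 h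
  refine rel_eq (NRel.nr2 _ _ ?_ ?_ ?_)
  · cases a <;> simp [PSym.toGen]
  · cases b <;> simp [PSym.toGen]
  · cases a <;> cases b <;> exact h'

theorem toGen_mul_toGen_of_left {a b : PSym N} (h : a.IsVerOf b.src) :
    G a.toGen * G b.toGen = G b.toGen := by
  cases a with
  | inl t => exact h.elim
  | inr A =>
    cases b with
    | inl u =>
      have : A = srcT N u := Subtype.ext h
      subst this; exact src_mul_pos u
    | inr B =>
      have : A = B := Subtype.ext h
      subst this; exact ver_mul_self A

theorem toGen_mul_toGen_of_right {a b : PSym N} (h : b.IsVerOf a.rng) :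
    G a.toGen * G b.toGen = G a.toGen := by
  cases b with
  | inl t => exact h.elim
  | inr A =>
    cases a with
    | inl u =>
      have : A = rngT N u := Subtype.ext h
      subst this; exact pos_mul_rng u
    | inr B =>
      have : A = B := Subtype.ext h
      subst this; exact ver_mul_self A

/-! ### Paths and their words -/

/-- The element `[α]` of `Q_Γ`. -/
def pv (L : List (PSym N)) : QGamma N := Qofw (word L)

/-- The element `[α⁻¹]` of `Q_Γ`. -/
def iv (L : List (PSym N)) : QGamma N := Qofw (invWord L)

theorem genWord_append {L M : List (Gen N)} (hL : L ≠ []) (hM : M ≠ []) :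
    genWord (L ++ M) = genWord L * genWord M := by
  cases L with
  | nil => exact absurd rfl hL
  | cons a L =>
    cases M with
    | nil => exact absurd rfl hM
    | cons b M => rfl

theorem pv_append {L M : List (PSym N)} (hL : L ≠ []) (hM : M ≠ []) :
    pv (L ++ M) = pv L * pv M := by
  unfold pv word
  rw [List.map_append, genWord_append (by simpa using hL) (by simpa using hM)]
  rfl

theorem pv_singleton (a : PSym N) : pv [a] = G a.toGen := rfl

theorem pv_cons {a : PSym N} {L : List (PSym N)} (hL : L ≠ []) :
    pv (a :: L) = G a.toGen * pv L :=
  pv_append (L := [a]) (by simp) hL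

theorem iv_singleton (a : PSym N) : iv [a] = G a.toInvGen := rfl

theorem iv_cons {a : PSym N} {L : List (PSym N)} (hL : L ≠ []) :
    iv (a :: L) = iv L * G a.toInvGen := by
  unfold iv invWord
  rw [List.reverse_cons, List.map_append, genWord_append (by simpa using hL) (by simp)]
  rfl

theorem Qrnf_eq (α β : List (PSym N)) : Qrnf N α β = pv α * iv β := rfl

theorem pathRng_cons_cons (a b : PSym N) (L : List (PSym N)) :
    pathRng N (a :: b :: L) = pathRng N (b :: L) := by
  simp [pathRng, List.getLast?_cons_cons]

theorem pathRng_append_singleton (L : List (PSym N)) (a : PSym N) :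
    pathRng N (L ++ [a]) = a.rng := by
  simp [pathRng]

theorem adjacent_iff {R : PSym N → PSym N → Prop} {L : List (PSym N)} :
    L.IsChain R ↔ ∀ (i : ℕ) (a b : PSym N), L[i]? = some a → L[i + 1]? = some b → R a b := by
  rw [List.isChain_iff_getElem]
  constructor
  · intro h i a b ha hb
    obtain ⟨hi, rfl⟩ := List.getElem?_eq_some_iff.1 ha
    obtain ⟨hi', rfl⟩ := List.getElem?_eq_some_iff.1 hb
    exact h i hi'
  · intro h i hi
    exact h i _ _ (List.getElem?_eq_getElem _) (List.getElem?_eq_getElem _)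

theorem isPath_iff {L : List (PSym N)} : IsPath N L ↔ L ≠ [] ∧ L.IsChain Meet := by
  rw [adjacent_iff]; rfl

/-- Adjacent symbols that meet and neither of which is a redundant element of `T⁰`. -/
def Good (a b : PSym N) : Prop := Meet a b ∧ ¬ a.IsVerOf b.src ∧ ¬ b.IsVerOf a.rng

theorem isReduced_of_good {L : List (PSym N)} (h : L.IsChain Good) : IsReducedPath N L := by
  rw [adjacent_iff] at h
  exact ⟨fun i a b ha hb _ => (h i a b ha hb).2.1,
    fun i a b c ha hb hc => ⟨(h i a b ha hb).2.1, (h _ b c hb hc).2.2⟩⟩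

/-- Every path can be reduced, by deleting redundant elements of `T⁰`, without changing its
class, its source or its range. -/
theorem exists_reduce (a : PSym N) (L : List (PSym N)) (h : (a :: L).IsChain Meet) :
    ∃ (b : PSym N) (M : List (PSym N)), (b :: M).IsChain Good ∧ pv (b :: M) = pv (a :: L) ∧
      pathRng N (b :: M) = pathRng N (a :: L) ∧ b.src = a.src := by
  induction L generalizing a with
  | nil => exact ⟨a, [], by simp, rfl, rfl, rfl⟩
  | cons c L ih =>
    rw [List.isChain_cons_cons] at h
    obtain ⟨b, M, hg, hv, hr, hs⟩ := ih c h.2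
    have hm : Meet a b := by unfold Meet; rw [hs]; exact h.1
    have hpv : pv (a :: c :: L) = G a.toGen * pv (b :: M) := by
      rw [pv_cons (by simp), hv]
    rw [hpv, pathRng_cons_cons, ← hr]
    by_cases h1 : a.IsVerOf b.src
    · refine ⟨b, M, hg, ?_, rfl, ?_⟩
      · cases M with
        | nil => rw [pv_singleton, toGen_mul_toGen_of_left h1]
        | cons d M => rw [pv_cons (by simp), ← mul_assoc, toGen_mul_toGen_of_left h1]
      · cases a with
        | inl t => exact h1.elim
        | inr A => exact h1.symm
    by_cases h2 : b.IsVerOf a.rng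
    · have hba : b.rng = a.rng := by
        cases b with
        | inl t => exact h2.elim
        | inr B => exact h2
      cases M with
      | nil =>
        refine ⟨a, [], by simp, ?_, hba.symm, rfl⟩
        rw [pv_singleton, pv_singleton, toGen_mul_toGen_of_right h2]
      | cons d M =>
        rw [List.isChain_cons_cons] at hg
        refine ⟨a, d :: M, List.isChain_cons_cons.2 ⟨⟨?_, ?_, ?_⟩, hg.2⟩, ?_, ?_, rfl⟩
        · have := hg.1.1
          unfold Meet at this ⊢
          rwa [hba] at this
        · intro h3
          apply hg.1.2.1
          cases a with
          | inl t => exact h3.elim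
          | inr A =>
            cases b with
            | inl t => exact h2.elim
            | inr B => exact Eq.trans h2 h3
        · rw [← hba]; exact hg.1.2.2
        · rw [pv_cons (a := a) (L := d :: M) (by simp), pv_cons (a := b) (L := d :: M) (by simp),
            ← mul_assoc, toGen_mul_toGen_of_right h2]
        · rw [pathRng_cons_cons, pathRng_cons_cons]
    · exact ⟨a, b :: M, List.isChain_cons_cons.2 ⟨⟨hm, h1, h2⟩, hg⟩, pv_cons (by simp),
        pathRng_cons_cons _ _ _, rfl⟩

theorem exists_RP {L : List (PSym N)} (h : IsPath N L) :
    ∃ M ∈ RP N, pv M = pv L ∧ pathRng N M = pathRng N L := by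
  obtain ⟨hne, hc⟩ := isPath_iff.1 h
  cases L with
  | nil => exact absurd rfl hne
  | cons a L =>
    obtain ⟨b, M, hg, hv, hr, -⟩ := exists_reduce a L hc
    exact ⟨b :: M, ⟨isPath_iff.2 ⟨by simp, hg.imp fun _ _ h => h.1⟩, isReduced_of_good hg⟩, hv, hr⟩

/-! ### Linear sequences of relations -/

/-- The range of `t` equals the source of `u`. -/
def Lnk (N : Network V T) (t u : T) : Prop := N.r t = N.s u

/-- A relation, regarded as a path symbol. -/
def rsym (N : Network V T) (t : T) : PSym N := Sum.inl t

/-- A sequence of relations, regarded as a list of path symbols. -/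
def tl (N : Network V T) (p : List T) : List (PSym N) := p.map (rsym N)

theorem tl_ne_nil (t : T) (p : List T) : tl N (t :: p) ≠ [] := List.cons_ne_nil _ _

theorem tl_mem_RLP {t : T} {p : List T} (h : (t :: p).IsChain (Lnk N)) :
    tl N (t :: p) ∈ RLP N := by
  have hl : (tl N (t :: p)).IsChain fun a b => a.rng = b.src :=
    (List.isChain_map (R := fun a b : PSym N => a.rng = b.src) (rsym N)).2 h
  have hg : (tl N (t :: p)).IsChain Good := by
    refine (List.isChain_map (R := Good) (rsym N)).2 (h.imp fun a b hab => ⟨?_, id, id⟩)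
    change (N.r a ∩ N.s b).Nonempty
    rw [show N.r a = N.s b from hab, Set.inter_self]
    exact N.s_nonempty b
  exact ⟨isPath_iff.2 ⟨tl_ne_nil _ _, hg.imp fun _ _ h => h.1⟩, adjacent_iff.1 hl,
    isReduced_of_good hg⟩

theorem tl_not_InT0 (t : T) (p : List T) : ¬ InT0Path N (tl N (t :: p)) := by
  rintro ⟨A, h⟩
  exact Sum.inl_ne_inr (List.cons.inj h).1

theorem iv_tl_cons (t u : T) (p : List T) :
    iv (tl N (t :: u :: p)) = iv (tl N (u :: p)) * G (.neg t) :=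
  iv_cons (tl_ne_nil _ _)

/-- A reduced linear path outside `T⁰` is a linear sequence of relations, possibly followed by
the redundant final symbol `r(t)` when it starts with `t` and has length two. In either case it
represents the same elements as a linear sequence of relations. -/
theorem RLP_normal {β : List (PSym N)} (h : β ∈ RLP N) (h0 : ¬ InT0Path N β) :
    ∃ t p, (t :: p).IsChain (Lnk N) ∧ pathRng N β = pathRng N (tl N (t :: p)) ∧
      pv β = pv (tl N (t :: p)) ∧ iv β = iv (tl N (t :: p)) := by
  obtain ⟨⟨hne, -⟩, hl, hr1, hr2⟩ := h
  have hlin : β.IsChain fun a b => a.rng = b.src := adjacent_iff.2 hl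
  clear hl
  match β, hne, h0, hlin, hr1, hr2 with
  | [Sum.inr A], _, h0, hlin, hr1, hr2 => exact absurd ⟨A, rfl⟩ h0
  | [Sum.inl t], _, h0, hlin, hr1, hr2 => exact ⟨t, [], by simp, rfl, rfl, rfl⟩
  | Sum.inr A :: b :: L, _, h0, hlin, hr1, hr2 =>
    exfalso
    have hA : PSym.IsVerOf (Sum.inr A : PSym N) b.src := (List.isChain_cons_cons.1 hlin).1
    cases L with
    | nil => exact hr1 0 _ _ rfl rfl rfl hA
    | cons c L => exact (hr2 0 _ _ _ rfl rfl rfl).1 hA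
  | [Sum.inl t, Sum.inr A], _, h0, hlin, hr1, hr2 =>
    have hA : N.r t = A.1 := (List.isChain_cons_cons.1 hlin).1
    have hA' : A = rngT N t := Subtype.ext hA.symm
    subst hA'
    exact ⟨t, [], by simp, rfl, pos_mul_rng t, rng_mul_neg t⟩
  | Sum.inl t :: Sum.inr A :: c :: L, _, h0, hlin, hr1, hr2 =>
    exfalso
    have hA : PSym.IsVerOf (Sum.inr A : PSym N) c.src :=
      (List.isChain_cons_cons.1 (List.isChain_cons_cons.1 hlin).2).1
    cases L with
    | nil => exact hr1 1 _ _ rfl rfl rfl hA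
    | cons d L => exact (hr2 1 _ _ _ rfl rfl rfl).1 hA
  | Sum.inl t :: Sum.inl u :: L, _, h0, hlin, hr1, hr2 =>
    -- From the third symbol on, an element of `T⁰` would be the range of a symbol that is neither
    -- first nor last, which reducedness excludes.
    have key : ∀ (a : PSym N) (u : T) (L : List (PSym N)),
        (a :: Sum.inl u :: L).IsChain (fun a b => a.rng = b.src) →
        (∀ (i : ℕ) (x y z : PSym N), (a :: Sum.inl u :: L)[i]? = some x →
          (a :: Sum.inl u :: L)[i + 1]? = some y → (a :: Sum.inl u :: L)[i + 2]? = some z →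
          ¬ z.IsVerOf y.rng) →
        ∃ p : List T, L = tl N p := by
      intro a u L
      induction L generalizing a u with
      | nil => exact fun _ _ => ⟨[], rfl⟩
      | cons c L ih =>
        intro hc hz
        have hc' := (List.isChain_cons_cons.1 hc).2
        cases c with
        | inl w =>
          obtain ⟨p, hp⟩ := ih (Sum.inl u) w hc'
            (fun i x y z hx hy hz' => hz (i + 1) x y z hx hy hz')
          exact ⟨w :: p, by rw [hp]; rfl⟩
        | inr A =>
          exact absurd (List.isChain_cons_cons.1 hc').1.symm (hz 0 _ _ _ rfl rfl rfl)
    obtain ⟨p, rfl⟩ := key _ _ _ hlin fun i x y z hx hy hz => (hr2 i x y z hx hy hz).2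
    refine ⟨t, u :: p, ?_, rfl, rfl, rfl⟩
    exact (List.isChain_map (R := fun a b : PSym N => a.rng = b.src) (rsym N)).1 hlin

/-! ### Right normal forms -/

/-- Products `z t₁⁻¹ ⋯ tₙ⁻¹` with `n ≥ 0`, where `z` satisfies the base predicate `B` and
consecutive ranges and sources agree. The index `A` is the element of `T⁰` at the right-hand end:
the one for which `B z A` holds if `n = 0`, and `s(tₙ)` otherwise. -/
inductive NF (B : QGamma N → N.T0 → Prop) : QGamma N → N.T0 → Prop
  | base (z : QGamma N) (A : N.T0) (h : B z A) : NF B z A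
  | step (x : QGamma N) (t : T) (h : NF B x (rngT N t)) : NF B (x * G (.neg t)) (srcT N t)

section NFlemmas

variable {B : QGamma N → N.T0 → Prop}

theorem NF.mul_self (hB : ∀ z A, B z A → z * G (.ver A) = z) {x : QGamma N} {A : N.T0}
    (h : NF B x A) : x * G (.ver A) = x := by
  cases h with
  | base _ _ h => exact hB _ _ h
  | step x t h => rw [mul_assoc, neg_mul_src]

theorem NF.mul_ver (hB : ∀ z A C, B z A → z * G (.ver C) = Qzero N ∨ B (z * G (.ver C)) C)
    {x : QGamma N} {A : N.T0} (h : NF B x A) (C : N.T0) :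
    x * G (.ver C) = Qzero N ∨ NF B (x * G (.ver C)) C := by
  cases h with
  | base _ _ h => exact (hB _ _ C h).imp id (NF.base _ _)
  | step x t h =>
    by_cases hC : C = srcT N t
    · subst hC
      right
      rw [mul_assoc, neg_mul_src]
      exact NF.step x t h
    · left
      rw [mul_assoc, neg_mul_ver_ne hC, mul_Qzero]

/-- The case `n ≥ 1` of right multiplication by a relation. -/
theorem NF.step_mul_pos (hid : ∀ z A, B z A → z * G (.ver A) = z)
    {x : QGamma N} {t : T} (h : NF B x (rngT N t)) (u : T) :
    x * G (.neg t) * G (.pos u) = Qzero N ∨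
      NF B (x * G (.neg t) * G (.pos u)) (rngT N u) := by
  by_cases hu : t = u
  · subst hu
    right
    rw [mul_assoc, neg_mul_pos, h.mul_self hid]
    exact h
  · left
    rw [mul_assoc, neg_mul_pos_ne hu, mul_Qzero]

/-- Normal forms and zero are closed under right multiplication, as soon as the base predicate
is closed under right multiplication by `T ∪ T⁰`. -/
theorem NF.mul_gen (hid : ∀ z A, B z A → z * G (.ver A) = z)
    (hver : ∀ z A C, B z A → z * G (.ver C) = Qzero N ∨ B (z * G (.ver C)) C)
    (hpos : ∀ z A u, B z A → z * G (.pos u) = Qzero N ∨ B (z * G (.pos u)) (rngT N u))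
    (x : QGamma N) (g : Gen N) (h : x = Qzero N ∨ ∃ A, NF B x A) :
    x * G g = Qzero N ∨ ∃ A, NF B (x * G g) A := by
  obtain rfl | ⟨A, h⟩ := h
  · exact Or.inl (Qzero_mul _)
  cases g with
  | zero => exact Or.inl (mul_Qzero _)
  | ver C => exact (h.mul_ver hver C).imp id fun h => ⟨C, h⟩
  | pos u =>
    refine Or.imp id (fun h => ⟨rngT N u, h⟩) ?_
    cases h with
    | base _ _ h => exact (hpos _ _ u h).imp id (NF.base _ _)
    | step x t h => exact h.step_mul_pos hid u
  | neg u =>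
    rw [← rng_mul_neg u, ← mul_assoc]
    obtain h0 | h' := h.mul_ver hver (rngT N u)
    · left; rw [h0, Qzero_mul]
    · exact Or.inr ⟨_, NF.step _ u h'⟩

theorem NF.extract {x : QGamma N} {A : N.T0} (h : NF B x A) :
    ∀ t, A = rngT N t → ∃ (z : QGamma N) (C : N.T0) (p : List T), B z C ∧
      (t :: p).IsChain (Lnk N) ∧ C.1 = pathRng N (tl N (t :: p)) ∧
      x * G (.neg t) = z * iv (tl N (t :: p)) := by
  induction h with
  | base z A h =>
    rintro t rfl
    exact ⟨z, _, [], h, by simp, rfl, rfl⟩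
  | step x u h ih =>
    intro t ht
    obtain ⟨z, C, p, hz, hc, hr, he⟩ := ih u rfl
    refine ⟨z, C, u :: p, hz, List.isChain_cons_cons.2 ⟨(congrArg Subtype.val ht).symm, hc⟩, ?_, ?_⟩
    · rw [hr]; exact (pathRng_cons_cons _ _ _).symm
    · rw [he, iv_tl_cons, mul_assoc]

theorem NF.build {z : QGamma N} {C : N.T0} (hz : B z C) (p : List T) :
    ∀ t, (t :: p).IsChain (Lnk N) → C.1 = pathRng N (tl N (t :: p)) →
      ∃ y, NF B y (rngT N t) ∧ z * iv (tl N (t :: p)) = y * G (.neg t) := by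
  induction p with
  | nil =>
    intro t _ hr
    have : C = rngT N t := Subtype.ext hr
    subst this
    exact ⟨z, NF.base _ _ hz, rfl⟩
  | cons u p ih =>
    intro t hc hr
    rw [List.isChain_cons_cons] at hc
    obtain ⟨y, hy, he⟩ := ih u hc.2 (hr.trans (pathRng_cons_cons _ _ _))
    have hut : rngT N t = srcT N u := Subtype.ext hc.1
    refine ⟨y * G (.neg u), hut ▸ NF.step y u hy, ?_⟩
    rw [iv_tl_cons, ← mul_assoc, he]

end NFlemmas

/-! ### The set `S_Γ` -/

/-- `z` is the class of a path with range `A`. -/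
def PathB (z : QGamma N) (A : N.T0) : Prop := ∃ w, IsPath N w ∧ z = pv w ∧ pathRng N w = A.1

theorem PathB.singleton (a : PSym N) {A : N.T0} (h : a.rng = A.1) : PathB (G a.toGen) A :=
  ⟨[a], isPath_iff.2 ⟨by simp, by simp⟩, rfl, h⟩

theorem PathB.mul_sym {z : QGamma N} {A C : N.T0} (h : PathB z A) (a : PSym N) (ha : a.rng = C.1) :
    z * G a.toGen = Qzero N ∨ PathB (z * G a.toGen) C := by
  obtain ⟨w, hw, rfl, -⟩ := h
  obtain ⟨hne, hc⟩ := isPath_iff.1 hw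
  obtain ⟨l, b, rfl⟩ := (List.eq_nil_or_concat w).resolve_left hne
  rw [List.concat_eq_append] at *
  by_cases hm : Meet b a
  · right
    refine ⟨(l ++ [b]) ++ [a], isPath_iff.2 ⟨by simp, ?_⟩, ?_, ?_⟩
    · rw [List.isChain_append]
      refine ⟨hc, by simp, ?_⟩
      intro x hx y hy
      simp at hx hy
      subst hx; subst hy; exact hm
    · exact (pv_append (L := l ++ [b]) (M := [a]) (by simp) (by simp)).symm
    · rw [pathRng_append_singleton, ha]
  · left
    have hb : G b.toGen * G a.toGen = Qzero N := toGen_mul_of_not_meet hm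
    cases l with
    | nil => exact hb
    | cons c l =>
      rw [pv_append (by simp) (by simp), pv_singleton, mul_assoc, hb, mul_Qzero]

theorem PathB.mul_self (z : QGamma N) (A : N.T0) (h : PathB z A) : z * G (.ver A) = z := by
  obtain ⟨w, hw, rfl, hr⟩ := h
  obtain ⟨hne, hc⟩ := isPath_iff.1 hw
  obtain ⟨l, b, rfl⟩ := (List.eq_nil_or_concat w).resolve_left hne
  rw [List.concat_eq_append] at *
  rw [pathRng_append_singleton] at hr
  have hb : G b.toGen * G (.ver A) = G b.toGen :=
    toGen_mul_toGen_of_right (b := Sum.inr A) hr.symm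
  cases l with
  | nil => exact hb
  | cons c l =>
    rw [pv_append (by simp) (by simp), pv_singleton, mul_assoc, hb]

/-- Every nonzero element of `Q_Γ` has a right normal form `αβ⁻¹`, with `α` a path. -/
theorem exists_NF (x : QGamma N) : x = Qzero N ∨ ∃ A, NF PathB x A := by
  refine Q_induct ?_ (NF.mul_gen PathB.mul_self ?_ ?_) x
  · intro g
    cases g with
    | zero => exact Or.inl rfl
    | pos t => exact Or.inr ⟨rngT N t, NF.base _ _ (PathB.singleton (Sum.inl t) rfl)⟩
    | ver A => exact Or.inr ⟨A, NF.base _ _ (PathB.singleton (Sum.inr A) rfl)⟩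
    | neg t =>
      refine Or.inr ⟨srcT N t, ?_⟩
      rw [← rng_mul_neg]
      exact NF.step _ t (NF.base _ _ (PathB.singleton (Sum.inr (rngT N t)) rfl))
  · exact fun z A C h => h.mul_sym (Sum.inr C) rfl
  · exact fun z A u h => h.mul_sym (Sum.inl u) rfl

/-- `S_Γ` is the left ideal of `Q_Γ` generated by the inverses of the relations. -/
theorem mem_Sset_iff (x : QGamma N) :
    x ∈ Sset N ↔ x = Qzero N ∨ ∃ (y : QGamma N) (t : T), x = y * G (.neg t) := by
  constructor
  · rintro (⟨α, β, -, hβ, h0, -, rfl⟩ | h)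
    · right
      obtain ⟨t, p, -, -, -, hi⟩ := RLP_normal hβ h0
      rw [Qrnf_eq, hi]
      cases p with
      | nil => exact ⟨pv α, t, rfl⟩
      | cons u p => exact ⟨pv α * iv (tl N (u :: p)), t, by rw [iv_tl_cons, mul_assoc]⟩
    · exact Or.inl h
  · rintro (rfl | ⟨y, t, rfl⟩)
    · exact Or.inr rfl
    rw [← rng_mul_neg t, ← mul_assoc]
    have h : y * G (.ver (rngT N t)) = Qzero N ∨
        NF PathB (y * G (.ver (rngT N t))) (rngT N t) := by
      obtain rfl | ⟨A, hA⟩ := exists_NF y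
      · exact Or.inl (Qzero_mul _)
      · exact hA.mul_ver (fun z A C h => h.mul_sym (Sum.inr C) rfl) _
    obtain h | h := h
    · right; rw [h, Qzero_mul]; rfl
    · left
      obtain ⟨z, C, p, ⟨w, hw, rfl, hwr⟩, hc, hr, he⟩ := h.extract t rfl
      obtain ⟨M, hM, hMv, hMr⟩ := exists_RP hw
      refine ⟨M, tl N (t :: p), hM, tl_mem_RLP hc, tl_not_InT0 _ _, ?_, ?_⟩
      · rw [hMr, hwr, hr]
      · rw [he, Qrnf_eq, hMv]

theorem Sset_mul (x : QGamma N) {y : QGamma N} (hy : y ∈ Sset N) : x * y ∈ Sset N := by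
  rw [mem_Sset_iff] at *
  obtain rfl | ⟨y, t, rfl⟩ := hy
  · exact Or.inl (mul_Qzero _)
  · exact Or.inr ⟨x * y, t, (mul_assoc _ _ _).symm⟩

/-! ### The set `R_Γ` -/

/-- `z` is the class of a nonempty linear sequence of relations with range `A`. -/
def LinB (z : QGamma N) (A : N.T0) : Prop :=
  ∃ t p, (t :: p).IsChain (Lnk N) ∧ z = pv (tl N (t :: p)) ∧ pathRng N (tl N (t :: p)) = A.1

theorem LinB.pathB {z : QGamma N} {A : N.T0} (h : LinB z A) : PathB z A := by
  obtain ⟨t, p, hc, rfl, hr⟩ := h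
  exact ⟨_, (tl_mem_RLP hc).1, rfl, hr⟩

theorem LinB.mul_self (z : QGamma N) (A : N.T0) (h : LinB z A) : z * G (.ver A) = z :=
  PathB.mul_self z A h.pathB

theorem LinB.mul_pos {z : QGamma N} {u : T} (h : LinB z (srcT N u)) :
    LinB (z * G (.pos u)) (rngT N u) := by
  obtain ⟨t, p, hc, rfl, hr⟩ := h
  refine ⟨t, p ++ [u], ?_, ?_, ?_⟩
  · rw [← List.cons_append, List.isChain_append]
    refine ⟨hc, by simp, ?_⟩
    intro x hx y hy
    simp only [List.head?_cons, Option.mem_def, Option.some.injEq] at hy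
    subst hy
    have : (tl N (t :: p)).getLast? = some (rsym N x) := by
      unfold tl; rw [List.getLast?_map, Option.mem_def.1 hx]; rfl
    unfold pathRng at hr
    rw [this] at hr
    exact hr
  · rw [← List.cons_append]
    unfold tl
    rw [List.map_append]
    exact (pv_append (L := tl N (t :: p)) (M := [rsym N u]) (by simp [tl]) (by simp)).symm
  · rw [← List.cons_append]
    unfold tl
    rw [List.map_append]
    exact pathRng_append_singleton _ _

theorem NF.lin_mul_pos {x : QGamma N} {A : N.T0} (h : NF LinB x A) {u : T} (hA : A = srcT N u) :
    x * G (.pos u) = Qzero N ∨ NF LinB (x * G (.pos u)) (rngT N u) := by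
  cases h with
  | base _ _ h => subst hA; exact Or.inr (NF.base _ _ h.mul_pos)
  | step x t h => exact h.step_mul_pos LinB.mul_self u

theorem mem_Rset_iff (x : QGamma N) :
    x ∈ Rset N ↔ x = Qzero N ∨ ∃ y t, NF LinB y (rngT N t) ∧ x = y * G (.neg t) := by
  constructor
  · rintro (⟨α, β, hα, hα0, hβ, hβ0, hr, rfl⟩ | h)
    · right
      obtain ⟨t, p, hc, hr', -, hi⟩ := RLP_normal hβ hβ0
      obtain ⟨u, l, hc', hr'', hp, -⟩ := RLP_normal hα hα0
      rw [Qrnf_eq, hi, hp]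
      obtain ⟨l', a, hla⟩ :=
        (List.eq_nil_or_concat (tl N (u :: l))).resolve_left (tl_ne_nil _ _)
      -- The final symbol of a sequence of relations is a relation, whose range lies in `T⁰`.
      obtain ⟨C, hC⟩ : ∃ C : N.T0, pathRng N (tl N (u :: l)) = C.1 := by
        rw [hla, List.concat_eq_append, pathRng_append_singleton]
        cases a with
        | inl w => exact ⟨rngT N w, rfl⟩
        | inr A => exact ⟨A, rfl⟩
      obtain ⟨y, hy, he⟩ := NF.build (B := LinB) (z := pv (tl N (u :: l))) (C := C)
        ⟨u, l, hc', rfl, hC⟩ p t hc (by rw [← hC, ← hr'', hr, hr'])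
      exact ⟨y, t, hy, he⟩
    · exact Or.inl h
  · rintro (rfl | ⟨y, t, hy, rfl⟩)
    · exact Or.inr rfl
    left
    obtain ⟨z, C, p, ⟨u, l, hc', rfl, hlr⟩, hc, hr, he⟩ := hy.extract t rfl
    exact ⟨tl N (u :: l), tl N (t :: p), tl_mem_RLP hc', tl_not_InT0 _ _, tl_mem_RLP hc,
      tl_not_InT0 _ _, hlr.trans hr, he⟩

/-- Multiplying by a linear sequence of relations, one relation at a time. -/
theorem mul_lin (l : List T) : ∀ (u : T) (x : QGamma N), (u :: l).IsChain (Lnk N) →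
    (x * G (.pos u) = Qzero N ∨ NF LinB (x * G (.pos u)) (rngT N u)) → ∀ A : N.T0,
    pathRng N (tl N (u :: l)) = A.1 →
      x * pv (tl N (u :: l)) = Qzero N ∨ NF LinB (x * pv (tl N (u :: l))) A := by
  induction l with
  | nil =>
    intro u x _ h A hA
    have : rngT N u = A := Subtype.ext hA
    subst this
    exact h
  | cons w l ih =>
    intro u x hc h A hA
    rw [List.isChain_cons_cons] at hc
    have hpv : pv (tl N (u :: w :: l)) = G (.pos u) * pv (tl N (w :: l)) :=
      pv_cons (tl_ne_nil _ _)
    rw [hpv, ← mul_assoc]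
    refine ih w _ hc.2 ?_ A ((pathRng_cons_cons _ _ _).symm.trans hA)
    obtain h | h := h
    · left; rw [h, Qzero_mul]
    · exact h.lin_mul_pos (Subtype.ext hc.1)

theorem mul_NF_lin {x : QGamma N} {t : T} (hx : NF LinB x (rngT N t)) {y : QGamma N} {A : N.T0}
    (hy : NF LinB y A) :
    x * G (.neg t) * y = Qzero N ∨ NF LinB (x * G (.neg t) * y) A := by
  induction hy with
  | base z A h =>
    obtain ⟨u, l, hc, rfl, hr⟩ := h
    exact mul_lin l u _ hc (hx.step_mul_pos LinB.mul_self u) A hr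
  | step y u h ih =>
    rw [← mul_assoc]
    obtain h0 | h' := ih
    · left; rw [h0, Qzero_mul]
    · exact Or.inr (NF.step _ u h')

theorem Rset_mul {x y : QGamma N} (hx : x ∈ Rset N) (hy : y ∈ Rset N) : x * y ∈ Rset N := by
  rw [mem_Rset_iff] at *
  obtain rfl | ⟨x, t, hx, rfl⟩ := hx
  · exact Or.inl (Qzero_mul _)
  obtain rfl | ⟨y, u, hy, rfl⟩ := hy
  · exact Or.inl (mul_Qzero _)
  rw [← mul_assoc]
  obtain h | h := mul_NF_lin hx hy
  · left; rw [h, Qzero_mul]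
  · exact Or.inr ⟨_, u, h, rfl⟩

theorem self_mul_inv_mem_Rset (t : T) : (G (.pos t) * G (.neg t) : QGamma N) ∈ Rset N :=
  (mem_Rset_iff _).2 (Or.inr ⟨_, t, NF.base _ _ ⟨t, [], by simp, rfl, rfl⟩, rfl⟩)

theorem self_mul_inv_mem_Sset (t : T) : (G (.pos t) * G (.neg t) : QGamma N) ∈ Sset N :=
  (mem_Sset_iff _).2 (Or.inr ⟨_, t, rfl⟩)

/-! ### A representation of `Q_Γ` -/

/-- The source of a finite sequence of relations, where the empty sequence has source `E`. -/
def lsrc (N : Network V T) (E : Set V) : List T → Set V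
  | [] => E
  | t :: _ => N.s t

open scoped Classical in
/-- The action of the generators, by partial maps, on finite sequences of relations: `t` prepends
itself to a sequence with source `r(t)`, `t⁻¹` removes such an initial `t`, and `A ∈ T⁰` fixes the
sequences with source exactly `A`. Undefined values and the action of `0` are `none`. -/
noncomputable def act (N : Network V T) (E : Set V) : Gen N → List T → Option (List T)
  | .pos t, L => if lsrc N E L = N.r t then some (t :: L) else none
  | .neg t, L => match L with
    | [] => none
    | u :: L => if u = t ∧ lsrc N E L = N.r t then some L else none
  | .ver A, L => if lsrc N E L = A.1 then some L else none
  | .zero, _ => none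

/-- The partial map of a generator as a total self-map of `Option (List T)` fixing `none`. -/
noncomputable def actEnd (N : Network V T) (E : Set V) (g : Gen N) :
    Function.End (Option (List T)) :=
  fun o => o.bind (act N E g)

theorem act_src {E : Set V} {g : Gen N} {L M : List T} (h : act N E g L = some M) :
    lsrc N E L = g.rngSet ∧ lsrc N E M = g.srcSet := by
  cases g with
  | pos t =>
    simp only [act, Option.ite_none_right_eq_some, Option.some.injEq] at h
    obtain ⟨h, rfl⟩ := h
    exact ⟨h, rfl⟩
  | neg t =>
    cases L with
    | nil => simp [act] at h
    | cons u L =>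
      simp only [act, Option.ite_none_right_eq_some, Option.some.injEq] at h
      obtain ⟨⟨rfl, h⟩, rfl⟩ := h
      exact ⟨rfl, h⟩
  | ver A =>
    simp only [act, Option.ite_none_right_eq_some, Option.some.injEq] at h
    obtain ⟨h, rfl⟩ := h
    exact ⟨h, h⟩
  | zero => simp [act] at h

theorem actEnd_rel {E : Set V} {x y : FreeSemigroup (Gen N)} (h : NRel N x y) :
    FreeSemigroup.lift (actEnd N E) x = FreeSemigroup.lift (actEnd N E) y := by
  have two : ∀ (g g' : Gen N) (o : Option (List T)),
      (actEnd N E g * actEnd N E g') o = (o.bind (act N E g')).bind (act N E g) := fun _ _ _ => rfl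
  have one : ∀ (g : Gen N) (o : Option (List T)), actEnd N E g o = o.bind (act N E g) :=
    fun _ _ => rfl
  have ver_of : ∀ (A : N.T0) (L : List T), lsrc N E L = A.1 → act N E (.ver A) L = some L :=
    fun A L h => if_pos h
  cases h <;> simp only [map_mul, FreeSemigroup.lift_of] <;> funext o <;> rw [two, one] <;>
    rcases o with _ | L <;> try rfl
  case nr1l.some g hg =>
    change (act N E g L).bind _ = act N E g L
    cases hM : act N E g L with
    | none => rfl
    | some M =>
      have := (act_src hM).2
      cases g with
      | zero => exact absurd rfl hg
      | _ => exact ver_of _ M this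
  case nr1r.some g hg =>
    change (act N E g.rngGen L).bind _ = act N E g L
    by_cases hL : lsrc N E L = g.rngSet
    · have : act N E g.rngGen L = some L := by
        cases g with
        | zero => exact absurd rfl hg
        | _ => exact ver_of _ L hL
      rw [this]; rfl
    · have h1 : act N E g L = none := by
        by_contra hne
        obtain ⟨M, hM⟩ := Option.ne_none_iff_exists'.1 hne
        exact hL (act_src hM).1
      have h2 : act N E g.rngGen L = none := by
        by_contra hne
        obtain ⟨M, hM⟩ := Option.ne_none_iff_exists'.1 hne
        have := (act_src hM).1
        apply hL
        cases g <;> exact this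
      rw [h1, h2]; rfl
  case nr2.some g g' hg hg' hd =>
    change (act N E g' L).bind _ = none
    cases hM : act N E g' L with
    | none => rfl
    | some M =>
      by_contra hne
      obtain ⟨K, hK⟩ := Option.ne_none_iff_exists'.1 hne
      have e1 := (act_src hM).2
      have e2 := (act_src (g := g) (L := M) hK).1
      rw [← e1, ← e2, Set.inter_self, e2] at hd
      cases g with
      | zero => exact absurd rfl hg
      | pos t => exact (N.r_nonempty t).ne_empty hd
      | neg t => exact (N.s_nonempty t).ne_empty hd
      | ver A => exact (T0_nonempty A).ne_empty hd
  case nr3.some t u htu =>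
    change (act N E (.pos u) L).bind _ = none
    simp only [act]
    split_ifs with h
    · simp [act, Ne.symm htu]
    · rfl
  case nr4.some t =>
    change (act N E (.pos t) L).bind _ = act N E (.ver _) L
    simp only [act]
    split_ifs with h
    · simp [act, h]
    · rfl
  case nr5.some t A hA =>
    change (act N E (.ver A) L).bind _ = none
    simp only [act]
    split_ifs with h
    · cases L with
      | nil => rfl
      | cons u L =>
        have : u ≠ t := by rintro rfl; exact hA h.symm
        simp [act, this]
    · rfl
  case nr6l.some g =>
    change (act N E g L).bind _ = none
    cases act N E g L <;> rfl

/-- The representation of `Q_Γ` extending `actEnd`. -/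
noncomputable def rep (N : Network V T) (E : Set V) (x : QGamma N) :
    Function.End (Option (List T)) :=
  Con.liftOn x (FreeSemigroup.lift (actEnd N E)) fun _ _ h =>
    (Con.conGen_le (c := Con.ker (FreeSemigroup.lift (actEnd N E)))).2
      (fun _ _ h' => actEnd_rel h') h

theorem rep_mul (E : Set V) (x y : QGamma N) : rep N E (x * y) = rep N E x * rep N E y := by
  induction x using Con.induction_on with
  | _ x =>
    induction y using Con.induction_on with
    | _ y => exact map_mul (FreeSemigroup.lift (actEnd N E)) x y

theorem rep_zero (E : Set V) (o : Option (List T)) : rep N E (Qzero N) o = none := by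
  cases o <;> rfl

theorem rep_none (E : Set V) (x : QGamma N) : rep N E x none = none := by
  induction x using Con.induction_on with
  | _ x =>
    induction x with
    | ih1 g => rfl
    | ih2 g y _ ih =>
      change rep N E (G g * Qofw y) none = none
      rw [rep_mul]
      change rep N E (G g) (rep N E (Qofw y) none) = none
      exact (congrArg (rep N E (G g)) ih).trans rfl

theorem rep_ver_nil (A : N.T0) : rep N A.1 (G (.ver A)) (some []) = some [] := if_pos rfl

end basic

/-! ### The ideal of a sink -/

section ideal

variable {N : Network V T} {v : N.T0}

/-- Base predicate for normal forms: elements `y v` with `y ∈ Q_Γ`, with right-hand end `v`. -/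
def SinkB (v : N.T0) (z : QGamma N) (A : N.T0) : Prop := A = v ∧ ∃ y, z = y * G (.ver v)

/-- The ideal of `Q_Γ` consisting of `0` and the products `y v t₁⁻¹ ⋯ tₙ⁻¹`. -/
def K (v : N.T0) : Set (QGamma N) := {x | x = Qzero N ∨ ∃ A, NF (SinkB v) x A}

/-- `v` is not met by the source of any relation, nor by any other element of `T⁰`. -/
structure IsSink (v : N.T0) : Prop where
  src : ∀ p, v.1 ∩ N.s p = ∅
  ver : ∀ A : N.T0, A ≠ v → v.1 ∩ A.1 = ∅

theorem ver_mul_pos_of_sink (hv : IsSink v) (u : T) :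
    (G (.ver v) : QGamma N) * G (.pos u) = Qzero N :=
  rel_eq (NRel.nr2 _ _ (by simp) (by simp) (hv.src u))

theorem ver_mul_ver_of_sink (hv : IsSink v) {A : N.T0} (h : A ≠ v) :
    (G (.ver v) : QGamma N) * G (.ver A) = Qzero N :=
  rel_eq (NRel.nr2 _ _ (by simp) (by simp) (hv.ver A h))

theorem neg_mul_sink (hv : IsSink v) (t : T) :
    (G (.neg t) : QGamma N) * G (.ver v) = Qzero N := by
  apply neg_mul_ver_ne
  rintro rfl
  have := hv.src t
  exact (N.s_nonempty t).ne_empty ((Set.inter_self _).symm.trans this)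

theorem SinkB.mul_self (z : QGamma N) (A : N.T0) (h : SinkB v z A) : z * G (.ver A) = z := by
  obtain ⟨rfl, y, rfl⟩ := h
  rw [mul_assoc, ver_mul_self]

theorem K_mul (hv : IsSink v) {x : QGamma N} (hx : x ∈ K v) (y : QGamma N) : x * y ∈ K v := by
  refine Q_induct_right (C := fun x => x ∈ K v) (NF.mul_gen SinkB.mul_self ?_ ?_) x hx y
  · rintro z A C ⟨rfl, y, rfl⟩
    by_cases hC : C = A
    · subst hC
      exact Or.inr ⟨rfl, y, by rw [mul_assoc, ver_mul_self]⟩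
    · left; rw [mul_assoc, ver_mul_ver_of_sink hv hC, mul_Qzero]
  · rintro z A u ⟨rfl, y, rfl⟩
    left; rw [mul_assoc, ver_mul_pos_of_sink hv, mul_Qzero]

theorem mul_K {x : QGamma N} (hx : x ∈ K v) (y : QGamma N) : y * x ∈ K v := by
  obtain rfl | ⟨A, h⟩ := hx
  · exact Or.inl (mul_Qzero _)
  refine Or.inr ⟨A, ?_⟩
  induction h with
  | base z A h =>
    obtain ⟨rfl, z, rfl⟩ := h
    exact NF.base _ _ ⟨rfl, y * z, (mul_assoc _ _ _).symm⟩
  | step x t h ih =>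
    rw [← mul_assoc]
    exact NF.step _ t ih

/-- Each `y v t₁⁻¹ ⋯ tₙ⁻¹` is `y h` with `h = v t₁⁻¹ ⋯ tₙ⁻¹`, and `h` has the one-sided inverse
`g = tₙ ⋯ t₁ v`. -/
theorem NF.sink_split {x : QGamma N} {A : N.T0} (hx : NF (SinkB v) x A) :
    ∃ y h g : QGamma N, x = y * h ∧ h * g = G (.ver v) ∧ G (.ver v) * h = h ∧
      NF (SinkB v) h A := by
  induction hx with
  | base z A h =>
    obtain ⟨rfl, y, rfl⟩ := h
    exact ⟨y, _, _, rfl, ver_mul_self _, ver_mul_self _,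
      NF.base _ _ ⟨rfl, G (.ver A), (ver_mul_self _).symm⟩⟩
  | step x t _ ih =>
    obtain ⟨y, h, g, rfl, hg, hv, hh⟩ := ih
    refine ⟨y, h * G (.neg t), G (.pos t) * g, mul_assoc _ _ _, ?_, ?_, NF.step _ t hh⟩
    · rw [mul_assoc, ← mul_assoc (G (.neg t)), neg_mul_pos, ← mul_assoc,
        hh.mul_self SinkB.mul_self, hg]
    · rw [← mul_assoc, hv]

/-- Elements of the ideal that lie in `S_Γ` have a right identity in the ideal and in `S_Γ`. -/
theorem exists_right_id (hv : IsSink v) {a : QGamma N} (ha : a ∈ K v) (haS : a ∈ Sset N) :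
    ∃ f, f ∈ K v ∧ f ∈ Sset N ∧ a * f = a := by
  have hz : ∃ f, f ∈ K v ∧ f ∈ Sset N ∧ Qzero N * f = Qzero N :=
    ⟨Qzero N, Or.inl rfl, Or.inr rfl, Qzero_mul _⟩
  obtain rfl | ⟨A, h⟩ := ha
  · exact hz
  cases h with
  | base _ _ h =>
    -- Here `a = a v`, and `t⁻¹ v = 0` for every `t`, so that `a = 0`.
    have hav := SinkB.mul_self _ _ h
    obtain ⟨rfl, -⟩ := h
    obtain rfl | ⟨y, t, rfl⟩ := (mem_Sset_iff _).1 haS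
    · exact hz
    · rw [mul_assoc, neg_mul_sink hv, mul_Qzero] at hav
      rw [← hav]
      exact hz
  | step x t h =>
    obtain ⟨y, h', g, rfl, hg, hvh, hh⟩ := h.sink_split
    refine ⟨G (.pos t) * g * (h' * G (.neg t)), mul_K (Or.inr ⟨_, NF.step _ t hh⟩) _,
      (mem_Sset_iff _).2 (Or.inr ⟨G (.pos t) * g * h', t, (mul_assoc _ _ _).symm⟩), ?_⟩
    calc y * h' * G (.neg t) * (G (.pos t) * g * (h' * G (.neg t)))
        = y * (h' * (G (.neg t) * G (.pos t)) * g * h' * G (.neg t)) := by simp only [mul_assoc]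
      _ = y * h' * G (.neg t) := by
        rw [neg_mul_pos, hh.mul_self SinkB.mul_self, hg, hvh, mul_assoc]

/-- The Rees congruence, on a subsemigroup of `Q_Γ`, of the ideal of the sink `v`. -/
def reesCon (hv : IsSink v) (S : Subsemigroup (QGamma N)) : Con S where
  r a b := a = b ∨ ((a : QGamma N) ∈ K v ∧ (b : QGamma N) ∈ K v)
  iseqv :=
    { refl := fun _ => Or.inl rfl
      symm := by
        rintro a b (h | h)
        · exact Or.inl h.symm
        · exact Or.inr h.symm
      trans := by
        rintro a b c (rfl | h) (rfl | h')
        · exact Or.inl rfl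
        · exact Or.inr h'
        · exact Or.inr h
        · exact Or.inr ⟨h.1, h'.2⟩ }
  mul' := by
    rintro a b c d (rfl | h) (rfl | h')
    · exact Or.inl rfl
    · exact Or.inr ⟨mul_K h'.1 _, mul_K h'.2 _⟩
    · exact Or.inr ⟨K_mul hv h.1 _, K_mul hv h.2 _⟩
    · exact Or.inr ⟨K_mul hv h.1 _, K_mul hv h.2 _⟩

theorem starOf_mem_K (hv : IsSink v) {S : Subsemigroup (QGamma N)}
    (hS : (S : Set (QGamma N)) = Sset N) {a : S} (ha : (a : QGamma N) ∈ K v) :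
    ((starOf a : S) : QGamma N) ∈ K v := by
  unfold starOf
  split_ifs with h
  · obtain ⟨-, hL⟩ := h.choose_spec
    set e := h.choose
    obtain ⟨f, hfK, hfS, haf⟩ := exists_right_id hv ha (hS ▸ a.2)
    -- From `a f = a 1` and `a L* e` it follows that `e f = e`.
    have hfS' : f ∈ S := by rw [← SetLike.mem_coe, hS]; exact hfS
    have hae : a * ⟨f, hfS'⟩ = a := Subtype.ext haf
    have h1 := (hL ((⟨f, hfS'⟩ : S) : WithOne S) 1).1 (by
      rw [mul_one, ← WithOne.coe_mul, hae])
    rw [mul_one, ← WithOne.coe_mul, WithOne.coe_inj] at h1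
    rw [← h1]
    exact mul_K hfK _
  · exact ha

theorem self_mul_inv_ne_zero (t : T) : (G (.pos t) * G (.neg t) : QGamma N) ≠ Qzero N := by
  intro h
  have h1 : (G (.ver (rngT N t)) : QGamma N) = Qzero N := by
    calc (G (.ver (rngT N t)) : QGamma N)
        = G (.neg t) * (G (.pos t) * G (.neg t)) * G (.pos t) := by
          rw [← mul_assoc, neg_mul_pos, mul_assoc, neg_mul_pos, ver_mul_self]
      _ = Qzero N := by rw [h, mul_Qzero, Qzero_mul]
  have h2 := rep_ver_nil (rngT N t)
  rw [h1, rep_zero] at h2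
  simp at h2

theorem self_mul_inv_mem_K (t : T) : (G (.pos t) * G (.neg t) : QGamma N) ∈ K (rngT N t) := by
  refine Or.inr ⟨srcT N t, ?_⟩
  rw [← pos_mul_rng t]
  exact NF.step _ t (NF.base _ _ ⟨rfl, _, rfl⟩)

/-- For `E ∈ T⁰` different from `v`, the representation on sequences ending at `E` kills the ideal
of the sink `v`. -/
theorem rep_K (hv : IsSink v) {E : Set V} (hE : E ≠ v.1) {x : QGamma N} (hx : x ∈ K v)
    (o : Option (List T)) : rep N E x o = none := by
  obtain rfl | ⟨A, h⟩ := hx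
  · exact rep_zero E o
  induction h generalizing o with
  | base z A h =>
    obtain ⟨rfl, y, rfl⟩ := h
    rw [rep_mul]
    change rep N E y (rep N E (G (.ver A)) o) = none
    have : rep N E (G (.ver A)) o = none := by
      cases o with
      | none => rfl
      | some L =>
        refine if_neg fun hL => ?_
        cases L with
        | nil => exact hE hL
        | cons u L =>
          have h1 := hv.src u
          have h2 : N.s u = A.1 := hL
          rw [← h2, Set.inter_self] at h1
          exact (N.s_nonempty u).ne_empty h1
    rw [this, rep_none]
  | step x t h ih =>
    rw [rep_mul]
    exact ih _

theorem self_mul_inv_notMem_K (hv : IsSink v) {q : T} (hq : N.r q ≠ v.1) :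
    (G (.pos q) * G (.neg q) : QGamma N) ∉ K v := by
  intro h
  have h1 : (G (.ver (rngT N q)) : QGamma N) ∈ K v := by
    have h2 := K_mul hv (mul_K h (G (.neg q))) (G (.pos q))
    rwa [← mul_assoc, neg_mul_pos, mul_assoc, neg_mul_pos, ver_mul_self] at h2
  have h3 := rep_K hv (E := (rngT N q).1) hq h1 (some [])
  rw [rep_ver_nil] at h3
  simp at h3

theorem isSink_rng (t : T) (h₁ : ∀ p : T, N.s p ≠ N.r t)
    (h₂ : ∀ A : Set V, N.InT0 A → (¬ ∃ v : V, A = {v}) → ¬ N.r t ⊆ A) :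
    IsSink (rngT N t) := by
  -- Applied to `r(t)` itself, `h₂` says that `r(t)` is a single vertex.
  obtain ⟨w, hw⟩ : ∃ w, N.r t = {w} := by
    by_contra h
    exact h₂ _ (rngT N t).2 h subset_rfl
  have key : ∀ A : N.T0, A ≠ rngT N t → N.r t ∩ A.1 = ∅ := by
    intro A hA
    rw [hw, Set.singleton_inter_eq_empty]
    intro hwA
    by_cases hs : ∃ u, A.1 = {u}
    · obtain ⟨u, hu⟩ := hs
      rw [hu, Set.mem_singleton_iff] at hwA
      exact hA (Subtype.ext (by rw [hu, ← hwA]; exact hw.symm))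
    · exact h₂ A.1 A.2 hs (by rw [hw]; exact Set.singleton_subset_iff.2 hwA)
  exact ⟨fun p => key (srcT N p) fun h => h₁ p (congrArg Subtype.val h), key⟩

end ideal

/-- if `|T| > 1` and there are `t, q ∈ T` with `o(r(t)) = 0`, `r(t) ≠ r(q)`,
and no non-singleton `A ∈ T⁰` contains `r(t)`, then `S_Γ` is not `*`-congruence-free as a
unary semigroup, and `R_Γ` is not congruence-free. -/
theorem SGamma_RGamma_not_congruence_free (N : Network V T)
    (hT : ∃ t₁ t₂ : T, t₁ ≠ t₂) (t q : T)
    (h₁ : ∀ p : T, N.s p ≠ N.r t)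
    (hq : N.r t ≠ N.r q)
    (h₂ : ∀ A : Set V, N.InT0 A → (¬ ∃ v : V, A = {v}) → ¬ N.r t ⊆ A) :
    (∃ Ssub : Subsemigroup (QGamma N), (Ssub : Set (QGamma N)) = Sset N ∧
      ∃ c : Con Ssub,
        (∀ a b : Ssub, c a b → c (starOf a) (starOf b)) ∧
        (∃ a b : Ssub, c a b ∧ a ≠ b) ∧
        (∃ a b : Ssub, ¬ c a b)) ∧
    (∃ Rsub : Subsemigroup (QGamma N), (Rsub : Set (QGamma N)) = Rset N ∧
      ∃ c : Con Rsub,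
        (∃ a b : Rsub, c a b ∧ a ≠ b) ∧
        (∃ a b : Rsub, ¬ c a b)) := by
  have hv := isSink_rng t h₁ h₂
  have hK := self_mul_inv_mem_K (N := N) t
  have hne := self_mul_inv_ne_zero (N := N) t
  have hnK := self_mul_inv_notMem_K (N := N) hv (q := q) hq.symm
  have h0K : Qzero N ∈ K (rngT N t) := Or.inl rfl
  refine ⟨⟨⟨Sset N, fun _ hb => Sset_mul _ hb⟩, rfl, reesCon hv _, ?_, ?_, ?_⟩,
    ⟨⟨Rset N, fun ha hb => Rset_mul ha hb⟩, rfl, reesCon hv _, ?_, ?_⟩⟩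
  · rintro a b (rfl | ⟨ha, hb⟩)
    · exact Or.inl rfl
    · exact Or.inr ⟨starOf_mem_K hv rfl ha, starOf_mem_K hv rfl hb⟩
  · exact ⟨⟨_, self_mul_inv_mem_Sset t⟩, ⟨_, Or.inr rfl⟩, Or.inr ⟨hK, h0K⟩,
      fun h => hne (congrArg Subtype.val h)⟩
  · refine ⟨⟨_, self_mul_inv_mem_Sset q⟩, ⟨_, Or.inr rfl⟩, ?_⟩
    rintro (h | h)
    · exact self_mul_inv_ne_zero q (congrArg Subtype.val h)
    · exact hnK h.1
  · exact ⟨⟨_, self_mul_inv_mem_Rset t⟩, ⟨_, Or.inr rfl⟩, Or.inr ⟨hK, h0K⟩,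
      fun h => hne (congrArg Subtype.val h)⟩
  · refine ⟨⟨_, self_mul_inv_mem_Rset q⟩, ⟨_, Or.inr rfl⟩, ?_⟩
    rintro (h | h)
    · exact self_mul_inv_ne_zero q (congrArg Subtype.val h)
    · exact hnK h.1

end NetworkSemigroup
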